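/- For complex w and σ with |Im(w)| < 1/2 and |Im(σ)| < 1/2, one has ∫_{ℝ+σ} e^{2πiwz}/cosh(πz) dz = 1/cosh(πw), where the integral is over the horizontal line ℝ + σ. -/

import Mathlib

/-! The integrand decays exponentially on the strip `|Im z| < 1/2`, so by Cauchy's theorem the
integral does not depend on `σ`. On the real line, the substitution `t = eˣ / (2 cosh x)` in the
beta integral gives `B(u, v) = 2 ∫ e^((u - v) x) / (2 cosh x)^(u + v) dx`. For `u = 1/2 + iw` and
`v = 1 - u` the right-hand side is, after rescaling, `π` times the integral in question, while the
left-hand side is `Γ(u) Γ(1 - u) = π / sin (π u) = π / cosh (π w)` by the reflection formula.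
-/

open MeasureTheory Set Filter Topology Complex Interval

section HorizontalLines

variable {E : Type*} [NormedAddCommGroup E]

lemma integral_ofReal_add_eq_integral_add_im_mul_I [NormedSpace ℝ E] (f : ℂ → E) (c : ℂ) :
    ∫ x : ℝ, f (x + c) = ∫ x : ℝ, f (x + c.im * I) := by
  rw [← integral_add_right_eq_self (fun x : ℝ => f (x + c.im * I)) c.re]
  simp only [ofReal_add, add_assoc, re_add_im]

lemma tendsto_intervalIntegral_vertical_of_norm_le [NormedSpace ℝ E] {f : ℂ → E} {g : ℝ → ℝ}
    {a b : ℝ} {l : Filter ℝ}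
    (hfg : ∀ z, z.im ∈ [[a, b]] → ‖f z‖ ≤ g z.re) (hg : Tendsto g l (𝓝 0)) :
    Tendsto (fun x : ℝ => ∫ y in a..b, f (x + y * I)) l (𝓝 0) := by
  refine squeeze_zero_norm (a := fun x => g x * |b - a|) (fun x => ?_) ?_
  · exact intervalIntegral.norm_integral_le_of_norm_le_const fun y hy => by
      simpa using hfg (x + y * I) (by simpa using uIoc_subset_uIcc hy)
  · simpa using hg.mul_const |b - a|

lemma integrable_horizontal_of_norm_le {f : ℂ → E} {g : ℝ → ℝ} {s : Set ℝ} {y : ℝ}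
    (hf : ContinuousOn f (im ⁻¹' s)) (hfg : ∀ z, z.im ∈ s → ‖f z‖ ≤ g z.re)
    (hg : Integrable g) (hy : y ∈ s) : Integrable fun x : ℝ => f (x + y * I) := by
  refine hg.mono' (Continuous.aestronglyMeasurable ?_) (ae_of_all _ fun x => ?_)
  · exact hf.comp_continuous (by fun_prop) fun x => by simpa using hy
  · simpa using hfg (x + y * I) (by simpa using hy)

theorem integral_add_mul_I_eq_of_norm_le [NormedSpace ℂ E] {f : ℂ → E} {g : ℝ → ℝ} {a b : ℝ}
    (hc : ContinuousOn f (im ⁻¹' [[a, b]])) (hd : DifferentiableOn ℂ f (im ⁻¹' uIoo a b))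
    (hfg : ∀ z, z.im ∈ [[a, b]] → ‖f z‖ ≤ g z.re)
    (hg : Integrable g) (hg₀ : Tendsto g (cocompact ℝ) (𝓝 0)) :
    ∫ x : ℝ, f (x + a * I) = ∫ x : ℝ, f (x + b * I) := by
  have hrect (T : ℝ) :
      (∫ x in -T..T, f (x + a * I)) - (∫ x in -T..T, f (x + b * I)) +
        I • (∫ y in a..b, f (T + y * I)) - I • (∫ y in a..b, f ((-T : ℝ) + y * I)) = 0 := by
    simpa using integral_boundary_rect_eq_zero_of_continuousOn_of_differentiableOn f
      ((-T : ℝ) + a * I) (T + b * I) (hc.mono fun z hz => by simpa using hz.2)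
      (hd.mono fun z hz => by simpa [uIoo] using hz.2)
  have hhor {y : ℝ} (hy : y ∈ [[a, b]]) :
      Tendsto (fun T : ℝ => ∫ x in -T..T, f (x + y * I)) atTop (𝓝 (∫ x : ℝ, f (x + y * I))) :=
    intervalIntegral_tendsto_integral (integrable_horizontal_of_norm_le hc hfg hg hy)
      tendsto_neg_atTop_atBot tendsto_id
  have hvert := tendsto_intervalIntegral_vertical_of_norm_le hfg hg₀
  have hright := hvert.mono_left atTop_le_cocompact
  have hleft := (hvert.mono_left atBot_le_cocompact).comp tendsto_neg_atTop_atBot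
  have hlim := (((hhor left_mem_uIcc).sub (hhor right_mem_uIcc)).add (hright.const_smul I)).sub
    (hleft.const_smul I)
  simp only [Function.comp_def, hrect, smul_zero, add_zero, sub_zero] at hlim
  exact sub_eq_zero.1 (tendsto_nhds_unique hlim tendsto_const_nhds)

end HorizontalLines

section ExponentialDecay

lemma tendsto_exp_neg_mul_abs_cocompact {c : ℝ} (hc : 0 < c) :
    Tendsto (fun x : ℝ => Real.exp (-c * |x|)) (cocompact ℝ) (𝓝 0) :=
  Real.tendsto_exp_atBot.comp
    ((tendsto_norm_cocompact_atTop (E := ℝ)).const_mul_atTop_of_neg (neg_neg_of_pos hc))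

lemma integrable_exp_neg_mul_abs {c : ℝ} (hc : 0 < c) :
    Integrable fun x : ℝ => Real.exp (-c * |x|) := by
  have hcont : Continuous fun x : ℝ => Real.exp (-c * |x|) := by fun_prop
  refine hcont.locallyIntegrable.integrable_of_isBigO_atTop_of_norm_isNegInvariant
    (g := fun x => Real.exp (-c * x)) (.of_forall fun x => by simp) ?_
    ⟨Ioi 0, Ioi_mem_atTop 0, integrableOn_exp_mul_Ioi (neg_neg_of_pos hc) 0⟩
  refine EventuallyEq.isBigO ?_
  filter_upwards [eventually_ge_atTop 0] with x hx
  rw [abs_of_nonneg hx]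

lemma exp_abs_div_two_le_cosh (x : ℝ) : Real.exp |x| / 2 ≤ Real.cosh x := by
  rw [Real.cosh_eq]
  gcongr
  exact Real.exp_abs_le x

lemma cosh_re_mul_abs_cos_im_le_norm_cosh (z : ℂ) :
    Real.cosh z.re * |Real.cos z.im| ≤ ‖cosh z‖ := by
  have hre : (cosh z).re = Real.cosh z.re * Real.cos z.im := by
    conv_lhs => rw [← re_add_im z, cosh_add, cosh_mul_I, sinh_mul_I]
    simp [cosh_ofReal_re, cos_ofReal_re]
  calc Real.cosh z.re * |Real.cos z.im| = |(cosh z).re| := by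
        rw [hre, abs_mul, abs_of_pos (Real.cosh_pos _)]
    _ ≤ ‖cosh z‖ := abs_re_le_norm _

lemma norm_cexp_mul_le (a z : ℂ) :
    ‖exp (a * z)‖ ≤ Real.exp (|a.re| * |z.re| + |a.im| * |z.im|) := by
  rw [norm_exp, Real.exp_le_exp, mul_re, ← abs_mul, ← abs_mul]
  linarith [le_abs_self (a.re * z.re), neg_le_abs (a.im * z.im)]

lemma cos_le_abs_cos_of_abs_le {x b : ℝ} (hb : b ≤ Real.pi) (hx : |x| ≤ b) :
    Real.cos b ≤ |Real.cos x| := by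
  rw [← Real.cos_abs x]
  exact (Real.cos_le_cos_of_nonneg_of_le_pi (abs_nonneg x) hb hx).trans (le_abs_self _)

lemma cosh_ne_zero_of_abs_im_lt {z : ℂ} (hz : |z.im| < Real.pi / 2) : cosh z ≠ 0 := by
  have hcos : Real.cos z.im ≠ 0 := (Real.cos_pos_of_mem_Ioo (abs_lt.1 hz)).ne'
  exact norm_pos_iff.1 <| lt_of_lt_of_le (by positivity) (cosh_re_mul_abs_cos_im_le_norm_cosh z)

lemma norm_cexp_mul_div_cosh_le {a z : ℂ} {b : ℝ} (hb : b < Real.pi / 2) (hz : |z.im| ≤ b) :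
    ‖exp (a * z) / cosh z‖ ≤
      2 * Real.exp (|a.im| * b) / Real.cos b * Real.exp (-(1 - |a.re|) * |z.re|) := by
  have hb₀ : 0 ≤ b := (abs_nonneg _).trans hz
  have hcos : 0 < Real.cos b := Real.cos_pos_of_mem_Ioo ⟨by linarith, hb⟩
  have hnum : ‖exp (a * z)‖ ≤ Real.exp (|a.re| * |z.re| + |a.im| * b) :=
    (norm_cexp_mul_le a z).trans (by gcongr)
  have hden : Real.exp |z.re| / 2 * Real.cos b ≤ ‖cosh z‖ :=
    calc Real.exp |z.re| / 2 * Real.cos b ≤ Real.cosh z.re * |Real.cos z.im| := by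
          gcongr
          · exact exp_abs_div_two_le_cosh _
          · exact cos_le_abs_cos_of_abs_le (by linarith) hz
      _ ≤ ‖cosh z‖ := cosh_re_mul_abs_cos_im_le_norm_cosh z
  calc ‖exp (a * z) / cosh z‖
      ≤ Real.exp (|a.re| * |z.re| + |a.im| * b) / (Real.exp |z.re| / 2 * Real.cos b) := by
        rw [norm_div]
        gcongr
    _ = 2 * Real.exp (|a.im| * b) / Real.cos b * Real.exp (-(1 - |a.re|) * |z.re|) := by
        rw [show -(1 - |a.re|) * |z.re| = |a.re| * |z.re| - |z.re| by ring, Real.exp_sub,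
          Real.exp_add]
        field_simp

end ExponentialDecay

section BetaIntegral

lemma betaIntegral_eq_integral_sigmoid (u v : ℂ) :
    betaIntegral u v = ∫ x : ℝ, (Real.sigmoid x : ℂ) ^ u * (Real.sigmoid (-x) : ℂ) ^ v := by
  rw [betaIntegral, intervalIntegral.integral_of_le zero_le_one, integral_Ioc_eq_integral_Ioo,
    ← Real.range_sigmoid, ← image_univ, integral_image_eq_integral_deriv_smul_of_monotoneOn
      MeasurableSet.univ (fun x _ => (Real.hasDerivAt_sigmoid x).hasDerivWithinAt)
      (Real.sigmoid_monotone.monotoneOn _), setIntegral_univ]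
  congr 1 with x
  have hp : (Real.sigmoid x : ℂ) ≠ 0 := ofReal_ne_zero.2 (Real.sigmoid_pos x).ne'
  have hq : (Real.sigmoid (-x) : ℂ) ≠ 0 := ofReal_ne_zero.2 (Real.sigmoid_pos (-x)).ne'
  have hneg : (Real.sigmoid (-x) : ℂ) = 1 - Real.sigmoid x := by simp [Real.sigmoid_neg]
  rw [← Real.sigmoid_neg, ← hneg, real_smul, cpow_sub _ _ hp, cpow_sub _ _ hq, cpow_one,
    cpow_one, ofReal_mul]
  field_simp

lemma sigmoid_two_mul (x : ℝ) : Real.sigmoid (2 * x) = Real.exp x / (2 * Real.cosh x) := by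
  rw [Real.sigmoid_def, Real.cosh_eq, show -(2 * x) = -x - x by ring, Real.exp_sub]
  field_simp

lemma ofReal_exp_cpow (x : ℝ) (u : ℂ) : (Real.exp x : ℂ) ^ u = exp (u * x) := by
  rw [cpow_def_of_ne_zero (ofReal_ne_zero.2 (Real.exp_pos x).ne'), ← ofReal_log (Real.exp_pos x).le,
    Real.log_exp, mul_comm]

theorem betaIntegral_eq_integral_cosh (u v : ℂ) :
    betaIntegral u v = 2 * ∫ x : ℝ, exp ((u - v) * x) / (2 * cosh x) ^ (u + v) := by
  have hpow (x : ℝ) : (Real.sigmoid (2 * x) : ℂ) ^ u * (Real.sigmoid (-(2 * x)) : ℂ) ^ v =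
      exp ((u - v) * x) / (2 * cosh x) ^ (u + v) := by
    have hcosh : 0 < 2 * Real.cosh x := by positivity
    rw [← mul_neg, sigmoid_two_mul, sigmoid_two_mul, Real.cosh_neg, ofReal_div, ofReal_div,
      div_cpow_ofReal_nonneg (Real.exp_pos _).le hcosh.le,
      div_cpow_ofReal_nonneg (Real.exp_pos _).le hcosh.le, ofReal_exp_cpow, ofReal_exp_cpow,
      div_mul_div_comm, ← exp_add, ← cpow_add _ _ (ofReal_ne_zero.2 hcosh.ne')]
    push_cast
    ring_nf
  have hscale := Measure.integral_comp_mul_left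
    (fun x : ℝ => (Real.sigmoid x : ℂ) ^ u * (Real.sigmoid (-x) : ℂ) ^ v) 2
  rw [← betaIntegral_eq_integral_sigmoid] at hscale
  simp only [← hpow, hscale]
  simp

end BetaIntegral

theorem integral_cexp_mul_div_cosh {a : ℂ} (ha : |a.re| < 1) :
    ∫ x : ℝ, exp (a * x) / cosh x = Real.pi / cos (Real.pi * a / 2) := by
  obtain ⟨hneg, hpos⟩ := abs_lt.1 ha
  have hre : ((1 + a) / 2).re = (1 + a.re) / 2 := by simp
  have hu : 0 < ((1 + a) / 2).re := by linarith
  have hv : 0 < (1 - (1 + a) / 2).re := by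
    rw [sub_re, one_re]
    linarith
  calc ∫ x : ℝ, exp (a * x) / cosh x = betaIntegral ((1 + a) / 2) (1 - (1 + a) / 2) := by
        rw [betaIntegral_eq_integral_cosh, ← integral_const_mul]
        congr 1 with x
        rw [add_sub_cancel, cpow_one, show (1 + a) / 2 - (1 - (1 + a) / 2) = a by ring]
        field_simp
    _ = Real.pi / sin (Real.pi * ((1 + a) / 2)) := by
        rw [betaIntegral_eq_Gamma_mul_div _ _ hu hv, Gamma_mul_Gamma_one_sub, add_sub_cancel,
          Gamma_one, div_one]
    _ = Real.pi / cos (Real.pi * a / 2) := by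
        rw [← sin_add_pi_div_two]
        ring_nf

theorem integral_cexp_mul_add_div_cosh_add {a c : ℂ} (ha : |a.re| < 1)
    (hc : |c.im| < Real.pi / 2) :
    ∫ x : ℝ, exp (a * (x + c)) / cosh (x + c) = Real.pi / cos (Real.pi * a / 2) := by
  have hδ : 0 < 1 - |a.re| := sub_pos.2 ha
  have habs {y : ℝ} (hy : y ∈ [[c.im, 0]]) : |y| ≤ |c.im| := by
    simpa using abs_sub_right_of_mem_uIcc hy
  have hdiff : DifferentiableOn ℂ (fun z => exp (a * z) / cosh z) (im ⁻¹' [[c.im, 0]]) :=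
    DifferentiableOn.div (by fun_prop) (by fun_prop) fun z hz =>
      cosh_ne_zero_of_abs_im_lt ((habs hz).trans_lt hc)
  have hshift := integral_add_mul_I_eq_of_norm_le hdiff.continuousOn
    (hdiff.mono (preimage_mono uIoo_subset_uIcc_self))
    (fun z hz => norm_cexp_mul_div_cosh_le hc (habs hz))
    ((integrable_exp_neg_mul_abs hδ).const_mul _)
    (by simpa using (tendsto_exp_neg_mul_abs_cocompact hδ).const_mul _)
  calc ∫ x : ℝ, exp (a * (x + c)) / cosh (x + c)
      = ∫ x : ℝ, exp (a * (x + c.im * I)) / cosh (x + c.im * I) :=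
        integral_ofReal_add_eq_integral_add_im_mul_I (fun z => exp (a * z) / cosh z) c
    _ = ∫ x : ℝ, exp (a * x) / cosh x := by simpa using hshift
    _ = Real.pi / cos (Real.pi * a / 2) := integral_cexp_mul_div_cosh ha

theorem stmt_6 (w σ : ℂ) (hw : |w.im| < 1/2) (hσ : |σ.im| < 1/2) :
    ∫ x : ℝ, Complex.exp (2 * Real.pi * Complex.I * w * ((x : ℂ) + σ))
        / Complex.cosh (Real.pi * ((x : ℂ) + σ))
      = 1 / Complex.cosh (Real.pi * w) := by
  have hpi : (Real.pi : ℂ) ≠ 0 := ofReal_ne_zero.2 Real.pi_ne_zero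
  have ha : |(2 * I * w).re| < 1 := by
    have hre : (2 * I * w).re = -(2 * w.im) := by simp
    rw [hre, abs_neg, abs_mul, abs_two]
    linarith
  have hc : |(Real.pi * σ).im| < Real.pi / 2 := by
    rw [im_ofReal_mul, abs_mul, abs_of_pos Real.pi_pos]
    nlinarith [Real.pi_pos]
  let F (y : ℝ) : ℂ := exp (2 * I * w * (y + Real.pi * σ)) / cosh (y + Real.pi * σ)
  calc _ = ∫ x : ℝ, F (Real.pi * x) := by
        congr 1 with x
        simp only [F, ofReal_mul]
        ring_nf
    _ = |Real.pi⁻¹| • ∫ y : ℝ, F y := Measure.integral_comp_mul_left F Real.pi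
    _ = Real.pi⁻¹ • (Real.pi / cos (Real.pi * (2 * I * w) / 2)) := by
        rw [abs_of_pos (inv_pos.2 Real.pi_pos), integral_cexp_mul_add_div_cosh_add ha hc]
    _ = 1 / cosh (Real.pi * w) := by
        rw [← cos_mul_I, real_smul, ofReal_inv,
          show Real.pi * (2 * I * w) / 2 = Real.pi * w * I by ring]
        field_simp
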